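/- arXiv:1611.07347 — 4 statements merged into one kernel-verified Lean document; each statement's English description precedes it below -/
import Mathlib

section
/- If AD − B² > 0, then w* minimizes the portfolio variance subject to the budget and target-return constraints: for every w ∈ ℝ^p with 1_p^T w = 1 and μ^T w = ρ, one has w*^T Σ w* ≤ w^T Σ w. -/
open Matrix

/-- If `AD − B² > 0`, then the Markowitz portfolio `w*` minimizes the portfolio
variance among all `w` satisfying the budget constraint `1_p' w = 1` and the target-return
constraint `μ' w = ρ`. -/
theorem markowitz_portfolio_optimality
    (p : ℕ) (hp : 1 ≤ p) (S : Matrix (Fin p) (Fin p) ℝ)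
    (hS : S.PosDef)
    (μ : Fin p → ℝ) (ρ : ℝ)
    (ones : Fin p → ℝ) (hones : ones = fun _ => (1 : ℝ))
    (A B D : ℝ)
    (hA : A = ones ⬝ᵥ (S⁻¹ *ᵥ ones))
    (hB : B = ones ⬝ᵥ (S⁻¹ *ᵥ μ))
    (hD : D = μ ⬝ᵥ (S⁻¹ *ᵥ μ))
    (hdet : 0 < A * D - B ^ 2)
    (wstar : Fin p → ℝ)
    (hw : wstar = ((D - ρ * B) / (A * D - B ^ 2)) • (S⁻¹ *ᵥ ones)
                + ((ρ * A - B) / (A * D - B ^ 2)) • (S⁻¹ *ᵥ μ)) :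
    ∀ w : Fin p → ℝ, ones ⬝ᵥ w = 1 → μ ⬝ᵥ w = ρ →
      wstar ⬝ᵥ (S *ᵥ wstar) ≤ w ⬝ᵥ (S *ᵥ w) := by
  intro w h1 h2
  have hu : IsUnit S.det := (Matrix.isUnit_iff_isUnit_det S).1 hS.isUnit
  have hT : Sᵀ = S := by
    have h := hS.isHermitian.eq
    rwa [Matrix.conjTranspose_eq_transpose_of_trivial] at h
  have hTi : (S⁻¹)ᵀ = S⁻¹ := by rw [Matrix.transpose_nonsing_inv, hT]
  have symm : ∀ (M : Matrix (Fin p) (Fin p) ℝ), Mᵀ = M → ∀ x y : Fin p → ℝ,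
      x ⬝ᵥ (M *ᵥ y) = y ⬝ᵥ (M *ᵥ x) := by
    intro M hM x y
    rw [Matrix.dotProduct_mulVec, ← Matrix.mulVec_transpose, hM, dotProduct_comm]
  have hB' : μ ⬝ᵥ (S⁻¹ *ᵥ ones) = B := by rw [hB, symm _ hTi]
  have hne : A * D - B ^ 2 ≠ 0 := hdet.ne'
  obtain ⟨a, ha⟩ : ∃ a, a = (D - ρ * B) / (A * D - B ^ 2) := ⟨_, rfl⟩
  obtain ⟨b, hb⟩ : ∃ b, b = (ρ * A - B) / (A * D - B ^ 2) := ⟨_, rfl⟩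
  rw [← ha, ← hb] at hw
  have e1 : ones ⬝ᵥ wstar = 1 := by
    rw [hw, dotProduct_add, dotProduct_smul, dotProduct_smul, ← hA, ← hB, ha, hb,
      smul_eq_mul, smul_eq_mul]
    rw [div_mul_eq_mul_div, div_mul_eq_mul_div, ← add_div, div_eq_iff hne]
    ring
  have e2 : μ ⬝ᵥ wstar = ρ := by
    rw [hw, dotProduct_add, dotProduct_smul, dotProduct_smul, hB', ← hD, ha, hb,
      smul_eq_mul, smul_eq_mul]
    rw [div_mul_eq_mul_div, div_mul_eq_mul_div, ← add_div, div_eq_iff hne]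
    ring
  have hSw : S *ᵥ wstar = a • ones + b • μ := by
    rw [hw, Matrix.mulVec_add, Matrix.mulVec_smul, Matrix.mulVec_smul, Matrix.mulVec_mulVec,
      Matrix.mulVec_mulVec, Matrix.mul_nonsing_inv _ hu, Matrix.one_mulVec, Matrix.one_mulVec]
  have key : ∀ v : Fin p → ℝ, ones ⬝ᵥ v = 1 → μ ⬝ᵥ v = ρ → v ⬝ᵥ (S *ᵥ wstar) = a + b * ρ := by
    intro v g1 g2
    rw [hSw, dotProduct_add, dotProduct_smul, dotProduct_smul, dotProduct_comm v ones,
      dotProduct_comm v μ, g1, g2, smul_eq_mul, smul_eq_mul, mul_one]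
  have k1 := key w h1 h2
  have k2 := key wstar e1 e2
  have k3 := symm S hT wstar w
  have hnn : 0 ≤ (w - wstar) ⬝ᵥ (S *ᵥ (w - wstar)) := by
    simpa using hS.posSemidef.dotProduct_mulVec_nonneg (w - wstar)
  rw [Matrix.mulVec_sub, sub_dotProduct, dotProduct_sub, dotProduct_sub] at hnn
  linarith
end

section
/- The gross exposure of the global minimum variance portfolio satisfies ‖w_u‖₁ ≤ (max_{1≤j≤p} ‖Θ_j‖₁) / C₀, where Θ_j denotes the j-th row of Θ and C₀ > 0 is the smallest eigenvalue of Θ. -/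
open Matrix Finset

/-- the gross exposure of the global minimum variance portfolio satisfies
`‖w_u‖₁ ≤ (max_j ‖Θ_j‖₁)/C₀`, where `C₀ > 0` is the smallest eigenvalue of `Θ = Σ⁻¹`
(expressed via the quadratic form lower bound). -/
theorem gmv_gross_exposure_bound
    (p : ℕ) (hp : 1 ≤ p) (S : Matrix (Fin p) (Fin p) ℝ)
    (hS : S.PosDef)
    (Θ : Matrix (Fin p) (Fin p) ℝ) (hΘ : Θ = S⁻¹)
    (C₀ : ℝ) (hC₀ : 0 < C₀)
    (heig : ∀ x : Fin p → ℝ, C₀ * (x ⬝ᵥ x) ≤ x ⬝ᵥ (Θ *ᵥ x))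
    (ones : Fin p → ℝ) (hones : ones = fun _ => (1 : ℝ))
    (wu : Fin p → ℝ)
    (hwu : wu = (ones ⬝ᵥ (Θ *ᵥ ones))⁻¹ • (Θ *ᵥ ones)) :
    (∑ i, |wu i|)
      ≤ (Finset.univ.sup' ⟨⟨0, hp⟩, Finset.mem_univ _⟩ fun j => ∑ k, |Θ j k|) / C₀ := by
  set M := Finset.univ.sup' ⟨⟨0, hp⟩, Finset.mem_univ _⟩ fun j => ∑ k, |Θ j k| with hM
  have hp' : (0 : ℝ) < p := by exact_mod_cast hp
  have hd : C₀ * p ≤ ones ⬝ᵥ (Θ *ᵥ ones) := by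
    have h := heig ones
    have h1 : ones ⬝ᵥ ones = (p : ℝ) := by simp [hones, dotProduct]
    rwa [h1] at h
  have hCp : 0 < C₀ * p := mul_pos hC₀ hp'
  have hdpos : 0 < ones ⬝ᵥ (Θ *ᵥ ones) := lt_of_lt_of_le hCp hd
  have hrow : ∀ j, |(Θ *ᵥ ones) j| ≤ M := by
    intro j
    have h1 : |(Θ *ᵥ ones) j| ≤ ∑ k, |Θ j k| := by
      have h2 : (Θ *ᵥ ones) j = ∑ k, Θ j k := by simp [hones, mulVec, dotProduct]
      rw [h2]
      exact Finset.abs_sum_le_sum_abs _ _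
    exact h1.trans (Finset.le_sup' (fun j => ∑ k, |Θ j k|) (Finset.mem_univ j))
  have hM0 : 0 ≤ M := (abs_nonneg _).trans (hrow ⟨0, hp⟩)
  have hsum : ∑ i, |(Θ *ᵥ ones) i| ≤ p * M := by
    calc ∑ i, |(Θ *ᵥ ones) i| ≤ ∑ _i : Fin p, M := Finset.sum_le_sum fun i _ => hrow i
      _ = p * M := by simp
  have hw : ∑ i, |wu i| = (∑ i, |(Θ *ᵥ ones) i|) / (ones ⬝ᵥ (Θ *ᵥ ones)) := by
    rw [div_eq_inv_mul, Finset.mul_sum]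
    refine Finset.sum_congr rfl fun i _ => ?_
    rw [hwu, Pi.smul_apply, smul_eq_mul, abs_mul, abs_of_pos (inv_pos.mpr hdpos)]
  rw [hw, div_le_div_iff₀ hdpos hC₀]
  calc (∑ i, |(Θ *ᵥ ones) i|) * C₀ ≤ (p * M) * C₀ := mul_le_mul_of_nonneg_right hsum hC₀.le
    _ = M * (C₀ * p) := by ring
    _ ≤ M * (ones ⬝ᵥ (Θ *ᵥ ones)) := mul_le_mul_of_nonneg_left hd hM0
end

section
/- The Karush–Kuhn–Tucker conditions of the nodewise lasso imply that τ̂² = (1/n) (y − X γ̂)^T y; that is, the penalized residual scale defined by the lasso objective equals the normalized inner product of the lasso residual with the response. -/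
open Matrix Finset

/-- KKT identity for the lasso: if `γ̂` globally minimizes the lasso objective
`γ ↦ (1/n)‖y − Xγ‖₂² + 2λ‖γ‖₁`, then
`τ̂² := (1/n)‖y − Xγ̂‖₂² + λ‖γ̂‖₁ = (1/n)(y − Xγ̂)' y`. -/
theorem lasso_kkt_tau_identity
    (n q : ℕ) (hn : 1 ≤ n) (hq : 1 ≤ q)
    (y : Fin n → ℝ) (X : Matrix (Fin n) (Fin q) ℝ) (lam : ℝ) (hlam : 0 < lam)
    (γhat : Fin q → ℝ)
    (hmin : ∀ γ : Fin q → ℝ,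
      (1 / (n : ℝ)) * (∑ i, (y i - (X *ᵥ γhat) i) ^ 2) + 2 * lam * (∑ k, |γhat k|)
        ≤ (1 / (n : ℝ)) * (∑ i, (y i - (X *ᵥ γ) i) ^ 2) + 2 * lam * (∑ k, |γ k|))
    (τsq : ℝ)
    (hτ : τsq = (1 / (n : ℝ)) * (∑ i, (y i - (X *ᵥ γhat) i) ^ 2) + lam * (∑ k, |γhat k|)) :
    τsq = (1 / (n : ℝ)) * ((y - X *ᵥ γhat) ⬝ᵥ y) := by
  set c : ℝ := 1 / (n : ℝ) with hc
  have hc0 : 0 ≤ c := by positivity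
  set v := X *ᵥ γhat with hv
  set L := ∑ k, |γhat k| with hL
  set R := ∑ i, (y i - v i) * v i with hR
  set F := ∑ i, (v i) ^ 2 with hF
  have hF0 : 0 ≤ c * F := mul_nonneg hc0 (Finset.sum_nonneg fun i _ => sq_nonneg _)
  have key : ∀ t : ℝ, -1 ≤ t → 0 ≤ t * (2 * lam * L - 2 * (c * R)) + t ^ 2 * (c * F) := by
    intro t ht
    have h := hmin ((1 + t) • γhat)
    have h1 : ∑ k, |((1 + t) • γhat) k| = (1 + t) * L := by
      rw [hL, Finset.mul_sum]
      refine Finset.sum_congr rfl fun k _ => ?_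
      rw [Pi.smul_apply, smul_eq_mul, abs_mul, abs_of_nonneg (by linarith)]
    have h2 : ∑ i, (y i - (X *ᵥ ((1 + t) • γhat)) i) ^ 2
        = ∑ i, (y i - v i) ^ 2 - 2 * t * R + t ^ 2 * F := by
      rw [hR, hF, Finset.mul_sum, Finset.mul_sum, ← Finset.sum_sub_distrib,
        ← Finset.sum_add_distrib]
      refine Finset.sum_congr rfl fun i _ => ?_
      rw [Matrix.mulVec_smul, ← hv, Pi.smul_apply, smul_eq_mul]
      ring
    rw [h1, h2] at h
    nlinarith [h]
  have hA : 2 * lam * L - 2 * (c * R) = 0 := by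
    generalize 2 * lam * L - 2 * (c * R) = A at key
    generalize c * F = B at key hF0
    by_contra hne
    have hD : 0 < |A| + B + 1 := by positivity
    have h := key (-(A / (|A| + B + 1))) (by
      rw [neg_le_neg_iff, div_le_one hD]
      linarith [le_abs_self A])
    have e : -(A / (|A| + B + 1)) * A + (-(A / (|A| + B + 1))) ^ 2 * B
        = -(A ^ 2 * (|A| + 1) / (|A| + B + 1) ^ 2) := by
      field_simp
      ring
    rw [e] at h
    have : 0 < A ^ 2 * (|A| + 1) / (|A| + B + 1) ^ 2 := by positivity
    linarith
  have hfin : (y - v) ⬝ᵥ y = ∑ i, (y i - v i) ^ 2 + R := by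
    rw [hR, ← Finset.sum_add_distrib]
    refine Finset.sum_congr rfl fun i _ => ?_
    rw [Pi.sub_apply]
    ring
  rw [hτ, hfin]
  linarith
end

section
/- If τ̂_j² > 0, then the j-th row of the relaxed inverse is an approximate inverse of the Gram matrix in the sense that ‖Σ̂_G Θ̂_j − e_j‖_∞ ≤ λ_j / τ̂_j², where e_j ∈ ℝ^p is the j-th standard unit vector: the j-th coordinate of Σ̂_G Θ̂_j equals exactly 1 and every other coordinate is bounded in absolute value by λ_j / τ̂_j². -/
open Matrix Finset

lemma small_t_aux (a Q : ℝ) (h : ∀ t : ℝ, 0 < t → t ≤ 1 → 2 * t * a ≤ t ^ 2 * Q) : a ≤ 0 := by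
  by_contra! ha
  have hD : 0 < |Q| + 1 + a := by positivity
  have ht : 0 < a / (|Q| + 1 + a) := by positivity
  have h1 := h _ ht (by rw [div_le_one hD]; linarith [abs_nonneg Q])
  have h2 : 2 * a ≤ a / (|Q| + 1 + a) * Q := by
    have : (a / (|Q| + 1 + a)) * (2 * a) ≤ (a / (|Q| + 1 + a)) * (a / (|Q| + 1 + a) * Q) := by
      linarith
    exact le_of_mul_le_mul_left this ht
  have h3 : a / (|Q| + 1 + a) * Q ≤ a := by
    rw [div_mul_eq_mul_div, div_le_iff₀ hD]
    nlinarith [le_abs_self Q]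
  linarith

/-- if `τ̂_j² > 0`, the `j`-th row of the relaxed inverse satisfies
`‖Σ̂_G Θ̂_j − e_j‖_∞ ≤ λ_j/τ̂_j²`: its `j`-th coordinate is exactly `1` and every other
coordinate is bounded in absolute value by `λ_j/τ̂_j²`. Columns other than `j` are indexed
by the subtype `{k : Fin p // k ≠ j}`. -/
theorem nodewise_approximate_inverse_row
    (n p : ℕ) (hn : 1 ≤ n) (hp : 2 ≤ p)
    (r : Matrix (Fin n) (Fin p) ℝ) (j : Fin p)
    (lam : ℝ) (hlam : 0 < lam)
    (γhat : {k : Fin p // k ≠ j} → ℝ)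
    (rmj : Matrix (Fin n) {k : Fin p // k ≠ j} ℝ)
    (hrmj : rmj = fun i k => r i k.val)
    (hmin : ∀ γ : {k : Fin p // k ≠ j} → ℝ,
      (1 / (n : ℝ)) * (∑ i, (r i j - (rmj *ᵥ γhat) i) ^ 2) + 2 * lam * (∑ k, |γhat k|)
        ≤ (1 / (n : ℝ)) * (∑ i, (r i j - (rmj *ᵥ γ) i) ^ 2) + 2 * lam * (∑ k, |γ k|))
    (τsq : ℝ)
    (hτ : τsq = (1 / (n : ℝ)) * (∑ i, (r i j - (rmj *ᵥ γhat) i) ^ 2)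
                  + lam * (∑ k, |γhat k|))
    (hτpos : 0 < τsq)
    (SigmaG : Matrix (Fin p) (Fin p) ℝ) (hSG : SigmaG = (1 / (n : ℝ)) • (rᵀ * r))
    (Θj : Fin p → ℝ)
    (hΘj : Θj = fun k => if h : k = j then 1 / τsq else -γhat ⟨k, h⟩ / τsq) :
    (SigmaG *ᵥ Θj) j = 1 ∧
    (∀ k : Fin p, k ≠ j → |(SigmaG *ᵥ Θj) k| ≤ lam / τsq) ∧
    (∀ k : Fin p, |(SigmaG *ᵥ Θj) k - (if k = j then 1 else 0)| ≤ lam / τsq) := by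
  have hn0 : (0:ℝ) < n := by exact_mod_cast hn
  set e : Fin n → ℝ := fun i => r i j - (rmj *ᵥ γhat) i with he
  have key : ∀ (d : {k : Fin p // k ≠ j} → ℝ) (t : ℝ),
      2 * t * ((1 / (n : ℝ)) * ∑ i, e i * (rmj *ᵥ d) i) ≤
        t ^ 2 * ((1 / (n : ℝ)) * ∑ i, (rmj *ᵥ d) i ^ 2)
          + 2 * lam * ((∑ k, |γhat k + t * d k|) - ∑ k, |γhat k|) := by
    intro d t
    have h := hmin (γhat + t • d)
    have h2 : ∑ i, (r i j - (rmj *ᵥ (γhat + t • d)) i) ^ 2 =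
        ∑ i, (r i j - (rmj *ᵥ γhat) i) ^ 2 - 2 * t * ∑ i, e i * (rmj *ᵥ d) i
          + t ^ 2 * ∑ i, (rmj *ᵥ d) i ^ 2 := by
      rw [Finset.mul_sum, Finset.mul_sum, ← Finset.sum_sub_distrib, ← Finset.sum_add_distrib]
      refine Finset.sum_congr rfl fun i _ => ?_
      rw [Matrix.mulVec_add, Matrix.mulVec_smul]
      simp only [he, Pi.add_apply, Pi.smul_apply, smul_eq_mul]
      ring
    rw [h2] at h
    simp only [Pi.add_apply, Pi.smul_apply, smul_eq_mul] at h
    linarith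
  -- coordinate bound
  have hcoord : ∀ (k : {k : Fin p // k ≠ j}) (s : ℝ), |s| = 1 →
      s * ((1 / (n : ℝ)) * ∑ i, e i * r i k.val) ≤ lam := by
    intro k s hs
    have hcol : ∀ i, (rmj *ᵥ (Pi.single k s)) i = r i k.val * s := by
      intro i
      have h0 : rmj i k = r i k.val := by rw [hrmj]
      rw [← h0]
      change ∑ x, rmj i x * (Pi.single k s : {k : Fin p // k ≠ j} → ℝ) x = _
      rw [Finset.sum_eq_single k]
      · rw [Pi.single_eq_same]
      · intro b _ hb
        rw [Pi.single_eq_of_ne hb, mul_zero]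
      · intro h
        exact absurd (Finset.mem_univ k) h
    have := small_t_aux (s * ((1 / (n : ℝ)) * ∑ i, e i * r i k.val) - lam)
      ((1 / (n : ℝ)) * ∑ i, (rmj *ᵥ (Pi.single k s)) i ^ 2) (by
        intro t ht _
        have h := key (Pi.single k s) t
        have h1 : ∑ i, e i * (rmj *ᵥ (Pi.single k s)) i = s * ∑ i, e i * r i k.val := by
          rw [Finset.mul_sum]
          refine Finset.sum_congr rfl fun i _ => ?_
          rw [hcol]; ring
        have h2 : ∑ l, |γhat l + t * (Pi.single k s : {k : Fin p // k ≠ j} → ℝ) l|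
            ≤ (∑ l, |γhat l|) + t := by
          calc _ ≤ ∑ l, (|γhat l| + (Pi.single k t : {k : Fin p // k ≠ j} → ℝ) l) := by
                refine Finset.sum_le_sum fun l _ => ?_
                refine (abs_add_le _ _).trans ?_
                by_cases hl : l = k
                · subst hl
                  simp [abs_mul, hs, abs_of_pos ht]
                · simp [Pi.single_eq_of_ne hl]
            _ = _ := by
                rw [Finset.sum_add_distrib]; simp
        rw [h1] at h
        have h3 := mul_le_mul_of_nonneg_left h2 hlam.le
        linarith)
    linarith
  have habs : ∀ k : {k : Fin p // k ≠ j}, |(1 / (n : ℝ)) * ∑ i, e i * r i k.val| ≤ lam := by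
    intro k
    have h1 := hcoord k 1 (by simp)
    have h2 := hcoord k (-1) (by simp)
    rw [abs_le]
    constructor <;> linarith
  -- scaling identity
  have hscale : (1 / (n : ℝ)) * ∑ i, e i * (rmj *ᵥ γhat) i = lam * ∑ k, |γhat k| := by
    have hs : ∀ t : ℝ, -1 ≤ t → (∑ k, |γhat k + t * γhat k|) = (1 + t) * ∑ k, |γhat k| := by
      intro t ht
      rw [Finset.mul_sum]
      refine Finset.sum_congr rfl fun k _ => ?_
      rw [show γhat k + t * γhat k = (1 + t) * γhat k by ring, abs_mul,
        abs_of_nonneg (by linarith)]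
    have h1 := small_t_aux ((1 / (n : ℝ)) * ∑ i, e i * (rmj *ᵥ γhat) i - lam * ∑ k, |γhat k|)
      ((1 / (n : ℝ)) * ∑ i, (rmj *ᵥ γhat) i ^ 2) (by
        intro t ht _
        have h := key γhat t
        rw [hs t (by linarith)] at h
        linarith)
    have h2 := small_t_aux (lam * ∑ k, |γhat k| - (1 / (n : ℝ)) * ∑ i, e i * (rmj *ᵥ γhat) i)
      ((1 / (n : ℝ)) * ∑ i, (rmj *ᵥ γhat) i ^ 2) (by
        intro t ht ht1
        have h := key γhat (-t)
        rw [hs (-t) (by linarith)] at h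
        linarith)
    linarith
  have hrΘ : ∀ i, (r *ᵥ Θj) i = e i / τsq := by
    intro i
    have h1 : (r *ᵥ Θj) i = ∑ k, r i k * Θj k := rfl
    have h2 : (rmj *ᵥ γhat) i = ∑ k : {k : Fin p // k ≠ j}, r i k.val * γhat k := by
      rw [hrmj]; rfl
    have h3 : ∑ k ∈ ({j}ᶜ : Finset (Fin p)), r i k * Θj k
        = ∑ k : {k : Fin p // k ≠ j}, r i k.val * Θj k.val :=
      Finset.sum_subtype _ (by simp) _
    rw [h1, Fintype.sum_eq_add_sum_compl j, h3]
    have h4 : ∀ k : {k : Fin p // k ≠ j}, r i k.val * Θj k.val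
        = -(r i k.val * γhat k) / τsq := by
      intro k
      rw [hΘj]
      simp only [dif_neg k.2]
      ring
    rw [Finset.sum_congr rfl fun k _ => h4 k, ← Finset.sum_div, Finset.sum_neg_distrib, ← h2]
    simp only [hΘj, he, dif_pos]
    ring
  have hSΘ : ∀ k, (SigmaG *ᵥ Θj) k = ((1 / (n : ℝ)) * ∑ i, e i * r i k) / τsq := by
    intro k
    rw [hSG, Matrix.smul_mulVec, ← Matrix.mulVec_mulVec, Pi.smul_apply, smul_eq_mul,
      mul_div_assoc, Finset.sum_div]
    congr 1
    change ∑ i, rᵀ k i * (r *ᵥ Θj) i = _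
    refine Finset.sum_congr rfl fun i _ => ?_
    rw [hrΘ, Matrix.transpose_apply]; ring
  have hj : (SigmaG *ᵥ Θj) j = 1 := by
    rw [hSΘ, div_eq_one_iff_eq hτpos.ne', hτ, ← hscale, ← mul_add, ← Finset.sum_add_distrib]
    congr 1
    refine Finset.sum_congr rfl fun i _ => ?_
    simp only [he]; ring
  have hk : ∀ k : Fin p, k ≠ j → |(SigmaG *ᵥ Θj) k| ≤ lam / τsq := by
    intro k hk
    rw [hSΘ, abs_div, abs_of_pos hτpos]
    exact div_le_div_of_nonneg_right (habs ⟨k, hk⟩) hτpos.le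
  refine ⟨hj, hk, fun k => ?_⟩
  by_cases h : k = j
  · subst h
    rw [hj]
    simp only [if_true, sub_self, abs_zero]
    positivity
  · simpa [h] using hk k h
end
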